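/- arXiv:2104.13688 — 4 statements merged into one kernel-verified Lean document; each statement's English description precedes it below -/
import Mathlib

section
/- Let G be a group with a biautomatic structure (Y, M), let H ≤ G be a subgroup, and let (X, L) be a biautomatic structure for H together with a constant μ ≥ 0 such that for every word V ∈ M with V̄ ∈ H there exists a word U ∈ L with Ū = V̄ and |(V(t))̄⁻¹ (U(t))̄|_Y ≤ μ for all t ≥ 0 (here letters of X are mapped into H ≤ G to evaluate words). If K ≤ H is an L-quasiconvex subgroup of H, then K is an M-quasiconvex subgroup of G. -/
/-!
Write `(Y, M)` for the structure `BM` on `G` and `(X, L)` for the structure `BL` on `H`, `W̄` for the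
element represented by `W`, and `U(t)` for `U.take t`, also identified with the element it represents.

Let `g ∈ K` and `W ∈ M` with `g * W̄ ∈ K`. Then `W̄ ∈ K ≤ H`, so compatibility gives `U ∈ L` with
the same endpoint as `W` that stays `μ`-close to it. Quasiconvexity of `K` in `H` puts `g * U(t)`
within `X`-distance `ν` of some `s ∈ K`. Since `X` is finite, there is a `C` such that every letter
of `X` is represented by a word of length at most `C` over `Y`, so `g * W(t)` is within
`Y`-distance `μ + ν * C` of `s`.
-/

/-- The element of `G` represented by a word over the alphabet `Y`, via the letter map `π`. -/
def wordProd {G : Type*} [Group G] {Y : Type*} (π : Y → G) (U : List Y) : G :=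
  (U.map π).prod

/-- A biautomatic structure on a group `G`. -/
structure BiautomaticStructure (G : Type*) [Group G] where
  /-- the alphabet -/
  Y : Type
  fintypeY : Fintype Y
  /-- the letter map -/
  π : Y → G
  inj : Function.Injective π
  symm : ∀ y : Y, ∃ y' : Y, π y' = (π y)⁻¹
  hasOne : ∃ y : Y, π y = 1
  gen : Subgroup.closure (Set.range π) = ⊤
  /-- the language -/
  M : Language Y
  regular : M.IsRegular
  represents : ∀ g : G, ∃ U ∈ M, wordProd π U = g
  fellowTraveller : ∃ lam : ℕ, ∀ U ∈ M, ∀ V ∈ M, ∀ x y : Y,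
    wordProd π U = π x * wordProd π V * π y →
    ∀ t : ℕ, ∃ W : List Y,
      wordProd π W = (wordProd π (U.take t))⁻¹ * π x * wordProd π (V.take t) ∧
      W.length ≤ lam


/-- A subset `S ⊆ G` is `M`-quasiconvex: there is `ν ≥ 0` such that every path in the Cayley
graph labelled by a word of `M` starting and ending in `S` stays in the `ν`-neighbourhood
of `S`. -/
def MQuasiconvex {G : Type*} [Group G] (B : BiautomaticStructure G) (S : Set G) : Prop :=
  ∃ ν : ℕ, ∀ g ∈ S, ∀ W ∈ B.M, g * wordProd B.π W ∈ S →
    ∀ t : ℕ, ∃ s ∈ S, ∃ P : List B.Y,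
      wordProd B.π P = (g * wordProd B.π (W.take t))⁻¹ * s ∧ P.length ≤ ν

theorem wordProd_append {G Y : Type*} [Group G] (π : Y → G) (U V : List Y) :
    wordProd π (U ++ V) = wordProd π U * wordProd π V := by
  simp [wordProd]

theorem wordProd_cons {G Y : Type*} [Group G] (π : Y → G) (y : Y) (V : List Y) :
    wordProd π (y :: V) = π y * wordProd π V := by
  simp [wordProd]

/-- The word length of a subgroup over a finite alphabet bounds word length in the ambient
group, up to a multiplicative constant. -/
theorem exists_word_length_le {G : Type*} [Group G] (BM : BiautomaticStructure G) (H : Subgroup G)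
    {X : Type*} [Finite X] (π : X → H) :
    ∃ C : ℕ, ∀ P : List X, ∃ Q : List BM.Y,
      wordProd BM.π Q = ((wordProd π P : ↥H) : G) ∧ Q.length ≤ P.length * C := by
  choose f _ hf using fun x : X => BM.represents (π x : G)
  obtain ⟨C, hC⟩ := (Set.finite_range fun x => (f x).length).bddAbove
  refine ⟨C, fun P => ?_⟩
  induction P with
  | nil => exact ⟨[], by simp [wordProd], by simp⟩
  | cons x P ih =>
    obtain ⟨Q, hQ, hlen⟩ := ih
    refine ⟨f x ++ Q, ?_, ?_⟩
    · rw [wordProd_append, wordProd_cons, hf, hQ, Subgroup.coe_mul]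
    · have hx : (f x).length ≤ C := hC ⟨x, rfl⟩
      rw [List.length_append, List.length_cons, Nat.succ_mul]
      omega

theorem stmt4 {G : Type*} [Group G] (BM : BiautomaticStructure G) (H : Subgroup G)
    (BL : BiautomaticStructure ↥H) (μ : ℕ)
    (hcompat : ∀ V ∈ BM.M, wordProd BM.π V ∈ H →
      ∃ U ∈ BL.M, ((wordProd BL.π U : ↥H) : G) = wordProd BM.π V ∧
        ∀ t : ℕ, ∃ P : List BM.Y,
          wordProd BM.π P =
            (wordProd BM.π (V.take t))⁻¹ * ((wordProd BL.π (U.take t) : ↥H) : G) ∧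
          P.length ≤ μ)
    (K : Subgroup ↥H) (hK : MQuasiconvex BL (K : Set ↥H)) :
    MQuasiconvex BM ((K.map H.subtype : Subgroup G) : Set G) := by
  have := BL.fintypeY
  obtain ⟨ν, hν⟩ := hK
  obtain ⟨C, hC⟩ := exists_word_length_le BM H BL.π
  refine ⟨μ + ν * C, ?_⟩
  rintro _ ⟨g, hg, rfl⟩ W hW ⟨k, hk, hgk⟩ t
  have hWk : wordProd BM.π W = ((g⁻¹ * k : H) : G) := by
    have h : (k : G) = g * wordProd BM.π W := hgk
    rw [Subgroup.coe_mul, h, Subgroup.coe_inv, inv_mul_cancel_left]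
  obtain ⟨U, hU, hUW, hclose⟩ := hcompat W hW (hWk ▸ SetLike.coe_mem _)
  have hUk : wordProd BL.π U = g⁻¹ * k := Subtype.ext (hUW.trans hWk)
  obtain ⟨s, hs, P, hP, hPlen⟩ := hν g hg U hU (by rwa [hUk, mul_inv_cancel_left]) t
  obtain ⟨R, hR, hRlen⟩ := hclose t
  obtain ⟨Q, hQ, hQlen⟩ := hC P
  refine ⟨s, ⟨s, hs, rfl⟩, R ++ Q, ?_, ?_⟩
  · rw [wordProd_append, hR, hQ, hP]
    simp only [Subgroup.coe_mul, Subgroup.coe_inv, Subgroup.coe_subtype]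
    group
  · rw [List.length_append]
    exact Nat.add_le_add hRlen (hQlen.trans (Nat.mul_le_mul_right C hPlen))
end

section
/- Let θ : ℝ^n → ℝ^N be a linear isometric embedding, and let f : ℝ^N → ℝ be a polyhedral function. Then f ∘ θ : ℝ^n → ℝ is a polyhedral function. -/
/-!
Since `⟪θ v, y⟫ = ⟪v, θ† y⟫`, composing `f_{C, y}` with `θ` gives `f_{θ⁻¹ C, θ† y}`, and positivity
(by injectivity of `θ`), covering and compatibility of the pairs all pass to preimages. What has to
be shown is that the preimage `θ⁻¹ C` of a finitely generated cone is finitely generated.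

The range of `θ` is cut out by finitely many linear equations, so it suffices to intersect a
finitely generated cone with the kernel of a single functional `φ` (`mem_span_hyperplaneGens`); this
is the elimination step of Fourier and Motzkin. Split the generators by the sign of `φ` and keep
those in the kernel together with the combinations `φ s • t - φ t • s` for `φ t < 0 < φ s`. If
`x = u + p + q` is the corresponding decomposition of a point of the kernel, then `φ q = - φ p`, and
by bilinearity `φ p • q - φ q • p = φ p • (p + q)` lies in the cone of the new generators; one
divides by `φ p`, unless it is `0`, in which case `p = q = 0`. Finally, a finite set of generators
inside the range of `θ` pulls back along the injective map `θ`.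

Cones are handled as `ℝ≥0`-submodules, so that they are the spans of their generators.
-/

open RealInnerProductSpace

noncomputable section

/-- The polyhedral cone over the finite family of vectors `z i`: all nonnegative
linear combinations of the `z i`. -/
def coneOverFam {n k : ℕ} (z : Fin k → EuclideanSpace ℝ (Fin n)) :
    Set (EuclideanSpace ℝ (Fin n)) :=
  {v | ∃ c : Fin k → ℝ, (∀ i, 0 ≤ c i) ∧ v = ∑ i, c i • z i}

/-- A subset of `ℝ^n` is a polyhedral cone if it is the cone over some finite set of vectors. -/
def IsPolyhedralCone {n : ℕ} (C : Set (EuclideanSpace ℝ (Fin n))) : Prop :=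
  ∃ (k : ℕ) (z : Fin k → EuclideanSpace ℝ (Fin n)), C = coneOverFam z

/-- The function `f_{C,y}`, equal to `⟨v, y⟩` on `C` and `0` elsewhere. -/
def coneFn {n : ℕ} (C : Set (EuclideanSpace ℝ (Fin n))) (y : EuclideanSpace ℝ (Fin n)) :
    EuclideanSpace ℝ (Fin n) → ℝ :=
  C.indicator (fun v => ⟪v, y⟫)

/-- `f : ℝ^n → ℝ` is a polyhedral function if it is the pointwise maximum of finitely many
functions `f_{C_j, y_j}` whose polyhedral cones `C_j` cover `ℝ^n`, where `⟨z, y_j⟩ > 0` for all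
nonzero `z ∈ C_j`, and where `⟨v, y_j⟩ = ⟨v, y_k⟩` whenever `v ∈ C_j ∩ C_k`. -/
def IsPolyhedral {n : ℕ} (f : EuclideanSpace ℝ (Fin n) → ℝ) : Prop :=
  ∃ (m : ℕ) (C : Fin m → Set (EuclideanSpace ℝ (Fin n))) (y : Fin m → EuclideanSpace ℝ (Fin n)),
    (∀ j, IsPolyhedralCone (C j)) ∧
    (∀ j, ∀ z ∈ C j, z ≠ 0 → 0 < ⟪z, y j⟫) ∧
    (⋃ j, C j) = Set.univ ∧
    (∀ j k : Fin m, ∀ v, v ∈ C j → v ∈ C k → ⟪v, y j⟫ = ⟪v, y k⟫) ∧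
    (∀ v, f v = ⨆ j, coneFn (C j) (y j) v)

end

open scoped NNReal

section Hyperplane

variable {V : Type*} [AddCommGroup V] [Module ℝ V]

lemma real_smul_mem_span {S : Set V} {a : ℝ} (ha : 0 ≤ a) {x : V}
    (hx : x ∈ Submodule.span ℝ≥0 S) : a • x ∈ Submodule.span ℝ≥0 S := by
  lift a to ℝ≥0 using ha
  exact Submodule.smul_mem _ a hx

/-- Generators of the intersection of the cone over `S` with the hyperplane `φ = 0`. -/
def hyperplaneGens (φ : V →ₗ[ℝ] ℝ) (S : Set V) : Set V :=
  {s ∈ S | φ s = 0} ∪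
    Set.image2 (fun s t => φ s • t - φ t • s) {s ∈ S | 0 < φ s} {s ∈ S | φ s < 0}

lemma hyperplaneGens_finite (φ : V →ₗ[ℝ] ℝ) {S : Set V} (hS : S.Finite) :
    (hyperplaneGens φ S).Finite :=
  (hS.sep _).union ((hS.sep _).image2 _ (hS.sep _))

lemma span_pos_nonneg (φ : V →ₗ[ℝ] ℝ) {S : Set V} (hS : ∀ s ∈ S, 0 < φ s) {p : V}
    (hp : p ∈ Submodule.span ℝ≥0 S) : 0 ≤ φ p ∧ (φ p = 0 → p = 0) := by
  induction hp using Submodule.span_induction with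
  | mem x hx => exact ⟨(hS x hx).le, fun h => absurd h (hS x hx).ne'⟩
  | zero => simp
  | add x y _ _ hx hy =>
    refine ⟨by rw [map_add]; exact add_nonneg hx.1 hy.1, fun h => ?_⟩
    rw [map_add] at h
    rw [hx.2 (by linarith [hx.1, hy.1]), hy.2 (by linarith [hx.1, hy.1]), add_zero]
  | smul a x _ hx =>
    have e : φ (a • x) = (a : ℝ) * φ x := by rw [NNReal.smul_def, map_smul, smul_eq_mul]
    refine ⟨by rw [e]; exact mul_nonneg a.2 hx.1, fun h => ?_⟩
    rw [e, mul_eq_zero] at h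
    rcases h with h | h
    · rw [NNReal.smul_def, h, zero_smul]
    · rw [hx.2 h, smul_zero]

/-- The elimination rule `φ p • q - φ q • p` extends from generators to the cones over the
positive and the negative generators, since it is bilinear in `p` and `q`. -/
lemma elim_mem_span (φ : V →ₗ[ℝ] ℝ) (S : Set V) {p q : V}
    (hp : p ∈ Submodule.span ℝ≥0 {s ∈ S | 0 < φ s})
    (hq : q ∈ Submodule.span ℝ≥0 {s ∈ S | φ s < 0}) :
    φ p • q - φ q • p ∈ Submodule.span ℝ≥0 (hyperplaneGens φ S) := by
  induction hp using Submodule.span_induction with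
  | mem s hs =>
    induction hq using Submodule.span_induction with
    | mem t ht => exact Submodule.subset_span (Or.inr ⟨s, hs, t, ht, rfl⟩)
    | zero => simp
    | add x y _ _ hx hy =>
      convert add_mem hx hy using 1
      rw [map_add]; module
    | smul a x _ hx =>
      convert Submodule.smul_mem _ a hx using 1
      simp only [NNReal.smul_def, map_smul, smul_eq_mul]; module
  | zero => simp
  | add x y _ _ hx hy =>
    convert add_mem hx hy using 1
    rw [map_add]; module
  | smul a x _ hx =>
    convert Submodule.smul_mem _ a hx using 1
    simp only [NNReal.smul_def, map_smul, smul_eq_mul]; module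

lemma mem_span_hyperplaneGens (φ : V →ₗ[ℝ] ℝ) (S : Set V) (x : V) :
    x ∈ Submodule.span ℝ≥0 (hyperplaneGens φ S) ↔ x ∈ Submodule.span ℝ≥0 S ∧ φ x = 0 := by
  constructor
  · intro hx
    induction hx using Submodule.span_induction with
    | mem x hx =>
      rcases hx with hx | ⟨s, hs, t, ht, rfl⟩
      · exact ⟨Submodule.subset_span hx.1, hx.2⟩
      · constructor
        · have h1 := real_smul_mem_span hs.2.le
            (Submodule.subset_span (R := ℝ≥0) ht.1)
          have h2 := real_smul_mem_span (neg_nonneg.2 ht.2.le)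
            (Submodule.subset_span (R := ℝ≥0) hs.1)
          convert add_mem h1 h2 using 1
          module
        · simp only [map_sub, map_smul, smul_eq_mul]; ring
    | zero => simp
    | add x y _ _ hx hy => exact ⟨add_mem hx.1 hy.1, by rw [map_add, hx.2, hy.2, add_zero]⟩
    | smul a x _ hx =>
      exact ⟨Submodule.smul_mem _ a hx.1, by rw [NNReal.smul_def, map_smul, hx.2, smul_zero]⟩
  · rintro ⟨hx, h0⟩
    have hS : S = {s ∈ S | φ s = 0} ∪ ({s ∈ S | 0 < φ s} ∪ {s ∈ S | φ s < 0}) := by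
      ext s
      simp only [Set.mem_union, Set.mem_ofPred_eq]
      have := lt_trichotomy (φ s) 0
      tauto
    rw [hS, Submodule.span_union, Submodule.span_union, Submodule.mem_sup] at hx
    obtain ⟨u, hu, r, hr, rfl⟩ := hx
    obtain ⟨p, hp, q, hq, rfl⟩ := Submodule.mem_sup.1 hr
    have hu0 : φ u = 0 := by
      clear h0
      induction hu using Submodule.span_induction with
      | mem x hx => exact hx.2
      | zero => simp
      | add x y _ _ hx hy => rw [map_add, hx, hy, add_zero]
      | smul a x _ hx => rw [NNReal.smul_def, map_smul, hx, smul_zero]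
    rw [map_add, map_add, hu0, zero_add] at h0
    refine add_mem (Submodule.span_mono Set.subset_union_left hu) ?_
    have hp' := span_pos_nonneg φ (fun s hs => hs.2) hp
    have hq' := span_pos_nonneg (-φ) (fun s hs => by simpa using hs.2) hq
    rw [LinearMap.neg_apply] at hq'
    by_cases h : φ p = 0
    · rw [hp'.2 h, hq'.2 (by linarith), add_zero]
      exact zero_mem _
    · have h1 := real_smul_mem_span (inv_nonneg.2 hp'.1)
        (elim_mem_span φ S hp hq)
      convert h1 using 1
      rw [show φ q = -φ p by linarith, neg_smul, sub_neg_eq_add,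
        ← smul_add, smul_smul, inv_mul_cancel₀ h, one_smul, add_comm]

lemma exists_gens_inter_ker {ι : Type*} (φ : ι → V →ₗ[ℝ] ℝ) (I : Finset ι) {S : Set V}
    (hS : S.Finite) : ∃ T : Set V, T.Finite ∧
      ∀ x, x ∈ Submodule.span ℝ≥0 T ↔ x ∈ Submodule.span ℝ≥0 S ∧ ∀ i ∈ I, φ i x = 0 := by
  classical
  induction I using Finset.induction_on with
  | empty => exact ⟨S, hS, by simp⟩
  | insert i I _ ih =>
    obtain ⟨T, hT, h⟩ := ih
    refine ⟨hyperplaneGens (φ i) T, hyperplaneGens_finite _ hT, fun x => ?_⟩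
    rw [mem_span_hyperplaneGens, h, Finset.forall_mem_insert]
    tauto

end Hyperplane

lemma isPolyhedralCone_iff {n : ℕ} (C : Set (EuclideanSpace ℝ (Fin n))) :
    IsPolyhedralCone C ↔ ∃ S : Set (EuclideanSpace ℝ (Fin n)), S.Finite ∧
      C = (Submodule.span ℝ≥0 S : Set (EuclideanSpace ℝ (Fin n))) := by
  have key : ∀ (k : ℕ) (z : Fin k → EuclideanSpace ℝ (Fin n)),
      coneOverFam z =
        (Submodule.span ℝ≥0 (Set.range z) : Set (EuclideanSpace ℝ (Fin n))) := by
    intro k z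
    ext v
    rw [SetLike.mem_coe, Submodule.mem_span_range_iff_exists_fun]
    constructor
    · rintro ⟨c, hc, rfl⟩
      exact ⟨fun i => ⟨c i, hc i⟩, rfl⟩
    · rintro ⟨c, rfl⟩
      exact ⟨fun i => c i, fun i => (c i).2, rfl⟩
  constructor
  · rintro ⟨k, z, rfl⟩
    exact ⟨Set.range z, Set.finite_range z, key k z⟩
  · rintro ⟨S, hS, rfl⟩
    obtain ⟨k, z, -, rfl⟩ := hS.fin_param
    exact ⟨k, z, (key k z).symm⟩

lemma IsPolyhedralCone.preimage {n N : ℕ}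
    (θ : EuclideanSpace ℝ (Fin n) →ₗᵢ[ℝ] EuclideanSpace ℝ (Fin N))
    {C : Set (EuclideanSpace ℝ (Fin N))} (hC : IsPolyhedralCone C) :
    IsPolyhedralCone (θ ⁻¹' C) := by
  rw [isPolyhedralCone_iff] at hC ⊢
  obtain ⟨S, hS, rfl⟩ := hC
  -- The range of `θ` is the kernel of `1 - θ θ†`, whose coordinates are the equations used.
  set P : EuclideanSpace ℝ (Fin N) →ₗ[ℝ] EuclideanSpace ℝ (Fin N) :=
    LinearMap.id - θ.toLinearMap ∘ₗ LinearMap.adjoint θ.toLinearMap with hP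
  have hadj : ∀ v, LinearMap.adjoint θ.toLinearMap (θ v) = v := by
    intro v
    refine ext_inner_right ℝ fun w => ?_
    rw [LinearMap.adjoint_inner_left]
    exact θ.inner_map_map v w
  obtain ⟨T, hT, h⟩ := exists_gens_inter_ker
    (fun i : Fin N => (EuclideanSpace.proj (𝕜 := ℝ) i).toLinearMap ∘ₗ P) Finset.univ hS
  have hrange : T ⊆ Set.range θ := by
    intro t ht
    have h0 := ((h t).1 (Submodule.subset_span ht)).2
    refine ⟨LinearMap.adjoint θ.toLinearMap t, ?_⟩
    have : P t = 0 := by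
      ext i
      exact h0 i (Finset.mem_univ i)
    rw [hP, LinearMap.sub_apply, sub_eq_zero] at this
    exact this.symm
  refine ⟨θ ⁻¹' T, hT.preimage θ.injective.injOn, ?_⟩
  let θ' : EuclideanSpace ℝ (Fin n) →ₗ[ℝ≥0] EuclideanSpace ℝ (Fin N) :=
    θ.toLinearMap.restrictScalars ℝ≥0
  have hmap : (Submodule.span ℝ≥0 (θ ⁻¹' T)).map θ' = Submodule.span ℝ≥0 T := by
    rw [Submodule.map_span]
    congr 1
    exact Set.image_preimage_eq_of_subset hrange
  ext v
  have h1 : v ∈ Submodule.span ℝ≥0 (θ ⁻¹' T) ↔ θ v ∈ Submodule.span ℝ≥0 T := by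
    rw [← hmap]
    refine ⟨fun hv => ⟨v, hv, rfl⟩, ?_⟩
    rintro ⟨w, hw, e⟩
    exact θ.injective e ▸ hw
  have h2 : P (θ v) = 0 := by
    change θ v - θ (LinearMap.adjoint θ.toLinearMap (θ v)) = 0
    rw [hadj, sub_self]
  rw [SetLike.mem_coe, h1, h, Set.mem_preimage, SetLike.mem_coe]
  refine ⟨fun hv => ⟨hv, fun i _ => ?_⟩, fun hv => hv.1⟩
  rw [LinearMap.comp_apply, h2, map_zero]

open RealInnerProductSpace in
/-- The composite of a polyhedral function with a linear isometric embedding is polyhedral. -/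
theorem stmt5 {n N : ℕ} (θ : EuclideanSpace ℝ (Fin n) →ₗᵢ[ℝ] EuclideanSpace ℝ (Fin N))
    (f : EuclideanSpace ℝ (Fin N) → ℝ) (hf : IsPolyhedral f) :
    IsPolyhedral (fun v => f (θ v)) := by
  obtain ⟨m, C, y, hC, hpos, hcover, hcompat, hf⟩ := hf
  have hin : ∀ v j, ⟪v, LinearMap.adjoint θ.toLinearMap (y j)⟫ = ⟪θ v, y j⟫ := fun v j =>
    LinearMap.adjoint_inner_right _ _ _
  refine ⟨m, fun j => θ ⁻¹' C j, fun j => LinearMap.adjoint θ.toLinearMap (y j),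
    fun j => (hC j).preimage θ, fun j z hz h0 => ?_, ?_, fun j k v hj hk => ?_, fun v => ?_⟩
  · rw [hin]
    exact hpos j _ hz fun h => h0 (θ.injective (h.trans θ.map_zero.symm))
  · rw [← Set.preimage_iUnion, hcover, Set.preimage_univ]
  · rw [hin, hin]
    exact hcompat j k _ hj hk
  · change f (θ v) = _
    rw [hf]
    refine iSup_congr fun j => ?_
    classical
    simp only [coneFn, Set.indicator_apply, Set.mem_preimage, hin]
end

section
/- Let f : ℝ^n → ℝ be a polyhedral function, and let G ≤ GL_n(ℝ) be a subgroup such that f(Av) = f(v) for all v ∈ ℝ^n and all A ∈ G. Then G is finite. -/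
/-!
A polyhedral `f` agrees with `⟪·, y j⟫` on `C j`. Call `w` an *essential gradient* of `f` if
`f v = ⟪v, w⟫` on a set of positive Lebesgue (outer) measure. Three facts give the theorem.

* There are finitely many essential gradients, since each is one of the `y j`: otherwise the set
  where `f = ⟪·, w⟫` lies in the union of the hyperplanes `(w - y j)ᗮ`, a null set
  (`essentialGradients_subset`).
* If `L` is an invertible linear map preserving `f`, its adjoint maps essential gradients to
  essential gradients (`adjoint_mem_essentialGradients`).
* Only `v = 0` is orthogonal to all of them (`exists_essentialGradient`): the cones of positive
  measure have dense union, so `v` lies in the closure of one such `C j`, where the estimate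
  `c * ‖v‖ ≤ ⟪v, y j⟫` (`exists_lower_bound`) persists for some `c > 0`.

Hence an element of `G` is determined by the self-map of a finite set given by its adjoint.
-/

open RealInnerProductSpace

noncomputable section

open Matrix

/-- The action of an `n × n` real matrix on `ℝ^n` (as Euclidean space). -/
def matAct {n : ℕ} (A : Matrix (Fin n) (Fin n) ℝ) (v : EuclideanSpace ℝ (Fin n)) :
    EuclideanSpace ℝ (Fin n) :=
  (WithLp.equiv 2 (Fin n → ℝ)).symm (A.mulVec ((WithLp.equiv 2 (Fin n → ℝ)) v))

open MeasureTheory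

/-- Positivity on a finitely generated cone is uniform; this stands in for closedness of the
cone. -/
lemma exists_lower_bound {n : ℕ} {C : Set (EuclideanSpace ℝ (Fin n))}
    (hC : IsPolyhedralCone C) {y : EuclideanSpace ℝ (Fin n)}
    (hpos : ∀ z ∈ C, z ≠ 0 → 0 < ⟪z, y⟫) :
    ∃ c : ℝ, 0 < c ∧ ∀ v ∈ C, c * ‖v‖ ≤ ⟪v, y⟫ := by
  obtain ⟨k, z, rfl⟩ := hC
  have hz : ∀ i, z i ∈ coneOverFam z := fun i =>
    ⟨Pi.single i 1, fun j => by by_cases h : j = i <;> simp [h],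
      by simp [Pi.single_apply, ite_smul]⟩
  have hci : ∀ i, ∃ c : ℝ, 0 < c ∧ c * ‖z i‖ ≤ ⟪z i, y⟫ := by
    intro i
    by_cases h : z i = 0
    · exact ⟨1, one_pos, by simp [h]⟩
    · have hn : 0 < ‖z i‖ := norm_pos_iff.2 h
      exact ⟨⟪z i, y⟫ / ‖z i‖, div_pos (hpos _ (hz i) h) hn, by field_simp; exact le_rfl⟩
  choose c hc0 hc using hci
  obtain ⟨d, hd0, hd⟩ : ∃ d : ℝ, 0 < d ∧ ∀ i, d ≤ c i := by
    rcases isEmpty_or_nonempty (Fin k) with h | h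
    · exact ⟨1, one_pos, fun i => isEmptyElim i⟩
    · obtain ⟨i, hi⟩ := Finite.exists_min c
      exact ⟨c i, hc0 i, hi⟩
  refine ⟨d, hd0, ?_⟩
  rintro v ⟨a, ha, rfl⟩
  rw [sum_inner]
  calc d * ‖∑ i, a i • z i‖ ≤ d * ∑ i, ‖a i • z i‖ := by
        gcongr; exact norm_sum_le _ _
    _ = ∑ i, a i * (d * ‖z i‖) := by
        rw [Finset.mul_sum]
        refine Finset.sum_congr rfl fun i _ => ?_
        rw [norm_smul, Real.norm_of_nonneg (ha i)]; ring
    _ ≤ ∑ i, ⟪a i • z i, y⟫ := by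
        refine Finset.sum_le_sum fun i _ => ?_
        rw [real_inner_smul_left]
        exact mul_le_mul_of_nonneg_left
          ((mul_le_mul_of_nonneg_right (hd i) (norm_nonneg _)).trans (hc i)) (ha i)

/-- The vectors `w` such that `f = ⟪·, w⟫` on a set of positive outer Lebesgue measure. -/
def essentialGradients {n : ℕ} (f : EuclideanSpace ℝ (Fin n) → ℝ) :
    Set (EuclideanSpace ℝ (Fin n)) :=
  {w | volume {v | f v = ⟪v, w⟫} ≠ 0}

lemma essentialGradients_subset {n m : ℕ} {f : EuclideanSpace ℝ (Fin n) → ℝ}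
    {C : Fin m → Set (EuclideanSpace ℝ (Fin n))} {y : Fin m → EuclideanSpace ℝ (Fin n)}
    (hcov : (⋃ j, C j) = Set.univ) (hf : ∀ j, ∀ v ∈ C j, f v = ⟪v, y j⟫) :
    essentialGradients f ⊆ Set.range y := by
  intro w hw
  by_contra hne
  refine hw (measure_mono_null (t := ⋃ j, ((innerSL ℝ (w - y j)).ker : Set _)) ?_ ?_)
  · intro v hv
    obtain ⟨j, hj⟩ := Set.mem_iUnion.1 (hcov ▸ Set.mem_univ v)
    refine Set.mem_iUnion.2 ⟨j, ?_⟩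
    have h1 : f v = ⟪v, w⟫ := hv
    have h2 := hf j v hj
    simp only [SetLike.mem_coe, LinearMap.mem_ker, ContinuousLinearMap.coe_coe, innerSL_apply_apply]
    rw [real_inner_comm, inner_sub_right]
    linarith
  · refine measure_iUnion_null fun j => Measure.addHaar_submodule _ _ fun htop => hne ⟨j, ?_⟩
    have h : w - y j ∈ (innerSL ℝ (w - y j)).ker := htop ▸ Submodule.mem_top
    simp only [LinearMap.mem_ker, ContinuousLinearMap.coe_coe, innerSL_apply_apply, inner_self_eq_zero] at h
    exact (sub_eq_zero.1 h).symm

lemma adjoint_mem_essentialGradients {n : ℕ} {f : EuclideanSpace ℝ (Fin n) → ℝ}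
    {L : EuclideanSpace ℝ (Fin n) →ₗ[ℝ] EuclideanSpace ℝ (Fin n)}
    (hdet : LinearMap.det L ≠ 0) (hinv : ∀ v, f (L v) = f v)
    {w : EuclideanSpace ℝ (Fin n)} (hw : w ∈ essentialGradients f) :
    LinearMap.adjoint L w ∈ essentialGradients f := by
  have h : {v | f v = ⟪v, LinearMap.adjoint L w⟫} = L ⁻¹' {v | f v = ⟪v, w⟫} := by
    ext v
    simp [LinearMap.adjoint_inner_right, hinv]
  change volume _ ≠ 0
  rw [h, Measure.addHaar_preimage_linearMap _ hdet]
  exact mul_ne_zero (by simpa using hdet) hw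

lemma exists_essentialGradient {n m : ℕ} {f : EuclideanSpace ℝ (Fin n) → ℝ}
    {C : Fin m → Set (EuclideanSpace ℝ (Fin n))} {y : Fin m → EuclideanSpace ℝ (Fin n)}
    (hC : ∀ j, IsPolyhedralCone (C j)) (hpos : ∀ j, ∀ z ∈ C j, z ≠ 0 → 0 < ⟪z, y j⟫)
    (hcov : (⋃ j, C j) = Set.univ) (hf : ∀ j, ∀ v ∈ C j, f v = ⟪v, y j⟫)
    {v : EuclideanSpace ℝ (Fin n)} (hv : v ≠ 0) :
    ∃ w ∈ essentialGradients f, ⟪v, w⟫ ≠ 0 := by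
  have hnull : volume (⋃ j : {j // volume (C j) = 0}, C j) = 0 :=
    measure_iUnion_null fun j => j.2
  have hdense : Dense (⋃ j : {j // volume (C j) = 0}, C j)ᶜ :=
    Measure.dense_of_ae (measure_eq_zero_iff_ae_notMem.1 hnull)
  have hsub : (⋃ j : {j // volume (C j) = 0}, C j)ᶜ ⊆ ⋃ j : {j // volume (C j) ≠ 0}, C j := by
    intro x hx
    obtain ⟨j, hj⟩ := Set.mem_iUnion.1 (hcov ▸ Set.mem_univ x)
    exact Set.mem_iUnion.2 ⟨⟨j, fun h0 => hx (Set.mem_iUnion.2 ⟨⟨j, h0⟩, hj⟩)⟩, hj⟩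
  have hvc := hdense.mono hsub v
  rw [closure_iUnion_of_finite] at hvc
  obtain ⟨⟨j, hj⟩, hvj⟩ := Set.mem_iUnion.1 hvc
  refine ⟨y j, fun h0 => hj (measure_mono_null (hf j) h0), ?_⟩
  obtain ⟨c, hc, hcle⟩ := exists_lower_bound (hC j) (hpos j)
  have hcl : IsClosed {x : EuclideanSpace ℝ (Fin n) | c * ‖x‖ ≤ ⟪x, y j⟫} :=
    isClosed_le (by fun_prop) (by fun_prop)
  have h : c * ‖v‖ ≤ ⟪v, y j⟫ := closure_minimal hcle hcl hvj
  exact ((mul_pos hc (norm_pos_iff.2 hv)).trans_le h).ne'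

/-- A subgroup of `GL_n(ℝ)` leaving a polyhedral function invariant is finite. -/
theorem stmt8 {n : ℕ} (f : EuclideanSpace ℝ (Fin n) → ℝ) (hf : IsPolyhedral f)
    (G : Subgroup (GL (Fin n) ℝ))
    (hinv : ∀ A ∈ G, ∀ v : EuclideanSpace ℝ (Fin n),
      f (matAct (A : Matrix (Fin n) (Fin n) ℝ) v) = f v) :
    (G : Set (GL (Fin n) ℝ)).Finite := by
  obtain ⟨m, C, y, hC, hpos, hcov, hcompat, hmax⟩ := hf
  have hnonneg : ∀ j, ∀ v ∈ C j, 0 ≤ ⟪v, y j⟫ := by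
    intro j v hv
    by_cases h : v = 0
    · simp [h]
    · exact (hpos j v hv h).le
  have hf : ∀ j, ∀ v ∈ C j, f v = ⟪v, y j⟫ := by
    intro j v hv
    have : Nonempty (Fin m) := ⟨j⟩
    rw [hmax]
    refine le_antisymm (ciSup_le fun k => ?_) ?_
    · by_cases hk : v ∈ C k
      · simp [coneFn, hk, hcompat j k v hv hk]
      · simpa [coneFn, hk] using hnonneg j v hv
    · refine le_trans ?_ (le_ciSup (Set.finite_range _).bddAbove j)
      simp [coneFn, hv]
  set D := essentialGradients f with hD
  have hDfin : D.Finite := (Set.finite_range y).subset (essentialGradients_subset hcov hf)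
  have : Finite D := hDfin
  have hdet : ∀ A : GL (Fin n) ℝ, LinearMap.det (toEuclideanLin (A : Matrix (Fin n) (Fin n) ℝ)) ≠ 0 := by
    intro A
    rw [LinearMap.det_toLpLin]
    exact ((isUnit_iff_isUnit_det _).1 A.isUnit).ne_zero
  let φ : GL (Fin n) ℝ → D → EuclideanSpace ℝ (Fin n) :=
    fun A w => LinearMap.adjoint (toEuclideanLin (A : Matrix (Fin n) (Fin n) ℝ)) w
  refine Set.Finite.of_finite_image (f := φ) ?_ ?_
  · refine (Set.Finite.pi' (t := fun _ : D => D) fun _ => hDfin).subset ?_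
    rintro _ ⟨A, hA, rfl⟩ w
    exact adjoint_mem_essentialGradients (hdet A) (hinv A hA) w.2
  · intro A _ B _ hAB
    refine Units.ext (toEuclideanLin.injective (LinearMap.ext fun v => ?_))
    by_contra hne
    obtain ⟨w, hw, h⟩ := exists_essentialGradient hC hpos hcov hf (sub_ne_zero.2 hne)
    apply h
    have hw' : LinearMap.adjoint (toEuclideanLin (A : Matrix (Fin n) (Fin n) ℝ)) w
      = LinearMap.adjoint (toEuclideanLin (B : Matrix (Fin n) (Fin n) ℝ)) w := congrFun hAB ⟨w, hw⟩
    rw [inner_sub_left, ← LinearMap.adjoint_inner_right, ← LinearMap.adjoint_inner_right, hw',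
      sub_self]

end
end

section
/- Let (X, L) be a finite-to-one biautomatic structure on ℤ^N. Suppose there exist words U_0, V_1, U_1, …, V_α, U_α over X with each V_j nonempty, such that every word of the form U_0 V_1^{k_1} U_1 ⋯ V_α^{k_α} U_α with k_1, …, k_α ∈ ℤ_{≥0} belongs to L. Then the set { z_1, …, z_α } ⊆ ℚ^N, where z_j = V̄_j / |V_j|, is linearly independent; that is, the distinct vectors among z_1, …, z_α are linearly independent over ℚ (repetitions z_j = z_{j'} for j ≠ j' are allowed). -/
/-!
Two words of `L` representing the same element stay uniformly close at equal times, so the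
asymptotic velocities of their paths must agree. Suppose `∑ e j • V̄ j = 0` with integers `e j`, not
all zero, where the indices with `e j ≠ 0` have pairwise distinct `z j`. Let `m` and `n` be the
positive and negative parts of `e`. For every `c`, the words with exponents `c • m` and `c • n`
represent the same element. If both `m` and `n` are nonzero, let `a` and `b` be their first support
indices: up to bounded error the two paths move with velocities `z a` and `z b` during a time that
grows linearly in `c`, so fellow travelling forces `z a = z b` (`velocity_eq`), although `a ≠ b`.
If one of `m`, `n` vanishes, then infinitely many words represent a single element
(`not_pumpable_zero`), against finite-to-oneness. A rational relation between distinct `z j` yields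
such an integer relation between the `V̄ j` after choosing one index for each vector and clearing
the denominators `|V j|`.
-/

/-- The element of `ℤ^N` represented by a word over the alphabet `X`, via the letter map `π`. -/
def wordSum {N : ℕ} {X : Type*} (π : X → (Fin N → ℤ)) (U : List X) : Fin N → ℤ :=
  (U.map π).sum

/-- A biautomatic structure on the free abelian group `ℤ^N`. -/
structure ZBiautomaticStructure (N : ℕ) where
  /-- the alphabet -/
  X : Type
  fintypeX : Fintype X
  /-- the letter map -/
  π : X → (Fin N → ℤ)
  inj : Function.Injective π
  symm : ∀ x : X, ∃ x' : X, π x' = -(π x)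
  hasZero : ∃ x : X, π x = 0
  gen : AddSubgroup.closure (Set.range π) = ⊤
  /-- the language -/
  L : Language X
  regular : L.IsRegular
  represents : ∀ v : Fin N → ℤ, ∃ U ∈ L, wordSum π U = v
  fellowTraveller : ∃ lam : ℕ, ∀ U ∈ L, ∀ V ∈ L, ∀ x y : X,
    wordSum π U = π x + wordSum π V + π y →
    ∀ t : ℕ, ∃ W : List X,
      wordSum π W = wordSum π (U.take t) - π x - wordSum π (V.take t) ∧
      W.length ≤ lam

/-- A biautomatic structure on `ℤ^N` is finite-to-one if every element of `ℤ^N` is represented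
by only finitely many words of the language. -/
def ZBiautomaticStructure.FiniteToOne {N : ℕ} (B : ZBiautomaticStructure N) : Prop :=
  ∀ v : Fin N → ℤ, {U | U ∈ B.L ∧ wordSum B.π U = v}.Finite

/-! ### Words and the elements they represent -/

section WordSums

variable {N : ℕ} {X : Type*} (π : X → (Fin N → ℤ))

lemma wordSum_append (A B : List X) : wordSum π (A ++ B) = wordSum π A + wordSum π B := by
  simp [wordSum]

lemma wordSum_flatten (A : List (List X)) :
    wordSum π A.flatten = (A.map (wordSum π)).sum := by
  induction A with
  | nil => simp [wordSum]
  | cons a A ih => simp [wordSum_append, ih]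

lemma wordSum_rep (n : ℕ) (A : List X) :
    wordSum π (List.replicate n A).flatten = n • wordSum π A := by
  simp [wordSum_flatten]

lemma length_rep (n : ℕ) (A : List X) :
    (List.replicate n A).flatten.length = n * A.length := by
  simp

lemma abs_wordSum_le {K : ℕ} (hK : ∀ x i, |π x i| ≤ K) (A : List X) (i : Fin N) :
    |wordSum π A i| ≤ K * A.length := by
  induction A with
  | nil => simp [wordSum]
  | cons a A ih =>
    have h : wordSum π (a :: A) i = π a i + wordSum π A i := by simp [wordSum]
    have h1 := abs_add_le (π a i) (wordSum π A i)
    have h2 := hK a i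
    rw [h]
    push_cast [List.length_cons]
    linarith

lemma abs_wordSum_take_sub_le {K : ℕ} (hK : ∀ x i, |π x i| ≤ K) (A : List X) (t p : ℕ)
    (i : Fin N) :
    |wordSum π (A.take (t + p)) i - wordSum π (A.take t) i| ≤ K * p := by
  rw [List.take_add, wordSum_append, Pi.add_apply, add_sub_cancel_left]
  refine (abs_wordSum_le π hK _ i).trans ?_
  have : ((A.drop t).take p).length ≤ p := by simp
  gcongr

/-- While a path reads a power of `V` after a fixed prefix `P`, its position at time `s * |V|` is
`s • V̄` up to an error depending only on `P`. -/
lemma abs_wordSum_take_rep_le {K : ℕ} (hK : ∀ x i, |π x i| ≤ K) (P V R : List X) (n s : ℕ)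
    (hs : s ≤ n) (i : Fin N) :
    |wordSum π ((P ++ (List.replicate n V).flatten ++ R).take (s * V.length)) i
      - s * wordSum π V i| ≤ 2 * K * P.length := by
  obtain ⟨d, rfl⟩ := Nat.exists_eq_add_of_le hs
  set A := P ++ (List.replicate (s + d) V).flatten ++ R with hA
  have h1 : A.take (s * V.length + P.length) = P ++ (List.replicate s V).flatten := by
    have : A = (P ++ (List.replicate s V).flatten) ++ ((List.replicate d V).flatten ++ R) := by
      rw [hA, List.replicate_add, List.flatten_append]
      simp only [List.append_assoc]
    rw [this]
    apply List.take_left'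
    rw [List.length_append, length_rep, add_comm]
  have h2 := abs_wordSum_take_sub_le π hK A (s * V.length) P.length i
  have h3 := abs_wordSum_le π hK P i
  rw [h1, wordSum_append, wordSum_rep] at h2
  rw [Pi.add_apply, Pi.smul_apply, nsmul_eq_mul] at h2
  rw [abs_le] at *
  constructor <;> linarith [h2.1, h2.2, h3.1, h3.2]

end WordSums

/-! ### Words with pumped factors -/

/-- If the exponents before position `a` vanish, the word starts with a prefix independent of the
exponents, followed by the power of `V a`. -/
lemma flatten_split {X : Type*} {α : ℕ} (U V : Fin α → List X) (a : Fin α) :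
    ∃ P : List X, ∀ k : Fin α → ℕ, (∀ j < a, k j = 0) → ∃ R : List X,
      (List.ofFn fun j => (List.replicate (k j) (V j)).flatten ++ U j).flatten
        = P ++ (List.replicate (k a) (V a)).flatten ++ R := by
  induction α with
  | zero => exact a.elim0
  | succ α ih =>
    cases a using Fin.cases with
    | zero => exact ⟨[], fun k _ => ⟨_, by
        rw [List.ofFn_succ, List.flatten_cons, List.nil_append, List.append_assoc]⟩⟩
    | succ a =>
      obtain ⟨P, hP⟩ := ih (fun j => U j.succ) (fun j => V j.succ) a
      refine ⟨U 0 ++ P, fun k hk => ?_⟩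
      obtain ⟨R, hR⟩ := hP (fun j => k j.succ) (fun j hj => hk _ (Fin.succ_lt_succ_iff.2 hj))
      refine ⟨R, ?_⟩
      rw [List.ofFn_succ, List.flatten_cons, hR, hk 0 (Fin.succ_pos a)]
      simp

/-- The word `U₀ V₁^{k₁} U₁ ⋯ V_α^{k_α} U_α`. -/
def pumpWord {X : Type*} {α : ℕ} (U : Fin (α + 1) → List X) (V : Fin α → List X)
    (k : Fin α → ℕ) : List X :=
  U 0 ++ (List.ofFn fun j : Fin α => (List.replicate (k j) (V j)).flatten ++ U j.succ).flatten

lemma wordSum_pumpWord {N : ℕ} {X : Type*} (π : X → (Fin N → ℤ)) {α : ℕ}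
    (U : Fin (α + 1) → List X) (V : Fin α → List X) (k : Fin α → ℕ) :
    wordSum π (pumpWord U V k) = wordSum π (U 0) + ∑ j : Fin α, wordSum π (U j.succ)
      + ∑ j, k j • wordSum π (V j) := by
  rw [pumpWord, wordSum_append, wordSum_flatten, List.map_ofFn, List.sum_ofFn]
  simp only [Function.comp_apply, wordSum_append, wordSum_rep, Finset.sum_add_distrib]
  abel

lemma pumpWord_split {X : Type*} {α : ℕ} (U : Fin (α + 1) → List X) (V : Fin α → List X)
    (a : Fin α) : ∃ P : List X, ∀ k : Fin α → ℕ, (∀ j < a, k j = 0) → ∃ R : List X,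
      pumpWord U V k = P ++ (List.replicate (k a) (V a)).flatten ++ R := by
  obtain ⟨P, hP⟩ := flatten_split (fun j => U j.succ) V a
  refine ⟨U 0 ++ P, fun k hk => ?_⟩
  obtain ⟨R, hR⟩ := hP k hk
  exact ⟨R, by rw [pumpWord, hR]; simp⟩

lemma exists_first {α : ℕ} (m : Fin α → ℕ) (hm : m ≠ 0) :
    ∃ a, m a ≠ 0 ∧ ∀ j < a, m j = 0 := by
  obtain ⟨j, hj⟩ := Function.ne_iff.1 hm
  obtain ⟨a, ha, hmin⟩ := wellFounded_lt.has_min {a | m a ≠ 0} ⟨j, hj⟩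
  exact ⟨a, ha, fun j hj => by_contra fun h => hmin j h hj⟩

/-! ### Asymptotic velocities and integer relations -/

/-- In a finite-to-one structure no nonzero exponent vector represents `0`: its multiples would give
words of unbounded length for a single element. -/
lemma not_pumpable_zero {N : ℕ} (B : ZBiautomaticStructure N) (hfo : B.FiniteToOne)
    {α : ℕ} {U : Fin (α + 1) → List B.X} {V : Fin α → List B.X} (hV : ∀ j, V j ≠ [])
    (hsub : ∀ k, pumpWord U V k ∈ B.L) (m : Fin α → ℕ)
    (h0 : ∑ j, m j • wordSum B.π (V j) = 0) : m = 0 := by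
  by_contra hm
  obtain ⟨a, ha, hfirst⟩ := exists_first m hm
  obtain ⟨P, hP⟩ := pumpWord_split U V a
  obtain ⟨C, hC⟩ := ((hfo (wordSum B.π (pumpWord U V 0))).image List.length).bddAbove
  have hmem : (pumpWord U V ((C + 1) • m)).length ≤ C := by
    refine hC ⟨_, ⟨hsub _, ?_⟩, rfl⟩
    rw [wordSum_pumpWord, wordSum_pumpWord]
    have : ∑ j, ((C + 1) • m) j • wordSum B.π (V j) = 0 := by
      simp only [Pi.smul_apply, smul_assoc, ← Finset.smul_sum, h0, smul_zero]
    rw [this]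
    simp
  obtain ⟨R, hR⟩ := hP ((C + 1) • m) (fun j hj => by simp [hfirst j hj])
  rw [hR, List.length_append, List.length_append, length_rep] at hmem
  have h1 : 0 < m a := Nat.pos_of_ne_zero ha
  have h2 : 0 < (V a).length := List.length_pos_of_ne_nil (hV a)
  have h3 : C + 1 ≤ ((C + 1) • m) a * (V a).length := by
    rw [Pi.smul_apply, smul_eq_mul, mul_assoc]
    exact Nat.le_mul_of_pos_right _ (Nat.mul_pos h1 h2)
  omega

lemma eq_zero_of_mul_bounded {d C : ℤ} (h : ∀ s : ℕ, |(s : ℤ) * d| ≤ C) : d = 0 := by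
  by_contra hd
  have h1 := h (C.toNat + 1)
  have h2 : 1 ≤ |d| := Int.one_le_abs hd
  have h3 : C ≤ C.toNat := Int.self_le_toNat C
  rw [abs_mul, abs_of_nonneg (by positivity)] at h1
  push_cast at h1
  nlinarith

/-- If two exponent vectors represent the same element, then their first active segments have equal
velocities, i.e. `V̄ a / |V a| = V̄ b / |V b|`. -/
lemma velocity_eq {N : ℕ} (B : ZBiautomaticStructure N)
    {α : ℕ} {U : Fin (α + 1) → List B.X} {V : Fin α → List B.X}
    (hsub : ∀ k, pumpWord U V k ∈ B.L) (m n : Fin α → ℕ) (a b : Fin α)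
    (hma : m a ≠ 0) (hm : ∀ j < a, m j = 0) (hnb : n b ≠ 0) (hn : ∀ j < b, n j = 0)
    (h : ∑ j, m j • wordSum B.π (V j) = ∑ j, n j • wordSum B.π (V j)) (i : Fin N) :
    ((V b).length : ℤ) * wordSum B.π (V a) i = (V a).length * wordSum B.π (V b) i := by
  have := B.fintypeX
  obtain ⟨K, hK⟩ : ∃ K : ℕ, ∀ x i, |B.π x i| ≤ K := by
    refine ⟨∑ x, ∑ i, (B.π x i).natAbs, fun x i => ?_⟩
    rw [Int.abs_eq_natAbs]
    exact_mod_cast (Finset.single_le_sum (f := fun i => (B.π x i).natAbs)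
      (fun _ _ => Nat.zero_le _) (Finset.mem_univ i)).trans
      (Finset.single_le_sum (f := fun x => ∑ i, (B.π x i).natAbs)
      (fun _ _ => Nat.zero_le _) (Finset.mem_univ x))
  obtain ⟨lam, hlam⟩ := B.fellowTraveller
  obtain ⟨o, ho⟩ := B.hasZero
  obtain ⟨P, hP⟩ := pumpWord_split U V a
  obtain ⟨Q, hQ⟩ := pumpWord_split U V b
  set p := (V a).length
  set q := (V b).length
  rw [← sub_eq_zero]
  refine eq_zero_of_mul_bounded (C := 2 * K * P.length + 2 * K * Q.length + K * lam)
    fun s => ?_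
  -- large enough for both powers to last until time `s * p * q`
  set c := s * q + s * p with hc
  have hsum : wordSum B.π (pumpWord U V (c • m)) = wordSum B.π (pumpWord U V (c • n)) := by
    simp only [wordSum_pumpWord, Pi.smul_apply, smul_assoc, ← Finset.smul_sum, h]
  obtain ⟨W, hW, hWl⟩ := hlam _ (hsub (c • m)) _ (hsub (c • n)) o o
    (by rw [hsum, ho]; simp) (s * q * p)
  obtain ⟨R, hR⟩ := hP (c • m) (fun j hj => by simp [hm j hj])
  obtain ⟨S, hS⟩ := hQ (c • n) (fun j hj => by simp [hn j hj])
  have hcm : s * q ≤ (c • m) a :=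
    (Nat.le_add_right _ _).trans (Nat.le_mul_of_pos_right c (Nat.pos_of_ne_zero hma))
  have hcn : s * p ≤ (c • n) b :=
    (Nat.le_add_left _ _).trans (Nat.le_mul_of_pos_right c (Nat.pos_of_ne_zero hnb))
  have e1 := abs_wordSum_take_rep_le B.π hK P (V a) R _ _ hcm i
  have e2 := abs_wordSum_take_rep_le B.π hK Q (V b) S _ _ hcn i
  rw [← hR] at e1
  rw [← hS, show s * p * (V b).length = s * q * p by simp only [q]; ring] at e2
  have e3 := abs_wordSum_le B.π hK W i
  have e4 : (K : ℤ) * W.length ≤ K * lam := by gcongr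
  rw [hW, ho] at e3
  simp only [Pi.sub_apply, sub_zero] at e3
  push_cast at e1 e2
  change |wordSum B.π (List.take (s * q * p) _) i - _| ≤ _ at e1
  rw [abs_le] at *
  constructor <;> linarith [e1.1, e1.2, e2.1, e2.2, e3.1, e3.2]

/-- The integral form of the theorem: an integer relation between the `V̄ j`, supported on indices
with pairwise distinct velocities, is trivial. -/
lemma int_relation_trivial {N : ℕ} (B : ZBiautomaticStructure N) (hfo : B.FiniteToOne)
    {α : ℕ} {U : Fin (α + 1) → List B.X} {V : Fin α → List B.X} (hV : ∀ j, V j ≠ [])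
    (hsub : ∀ k, pumpWord U V k ∈ B.L) (e : Fin α → ℤ)
    (hinj : ∀ a b, e a ≠ 0 → e b ≠ 0 → (∀ i, ((V b).length : ℤ) * wordSum B.π (V a) i
      = (V a).length * wordSum B.π (V b) i) → a = b)
    (he : ∑ j, e j • wordSum B.π (V j) = 0) : e = 0 := by
  set m : Fin α → ℕ := fun j => (e j).toNat with hm
  set n : Fin α → ℕ := fun j => (-e j).toNat with hn
  have hmn : ∀ j, e j = (m j : ℤ) - n j := fun j => by simp only [hm, hn]; omega
  have hsum : ∑ j, m j • wordSum B.π (V j) = ∑ j, n j • wordSum B.π (V j) := by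
    rw [← sub_eq_zero, ← Finset.sum_sub_distrib, ← he]
    refine Finset.sum_congr rfl fun j _ => ?_
    rw [hmn, sub_smul, natCast_zsmul, natCast_zsmul]
  have key : m = 0 ∧ n = 0 := by
    by_cases hm0 : m = 0
    · exact ⟨hm0, not_pumpable_zero B hfo hV hsub n (by rw [← hsum, hm0]; simp)⟩
    by_cases hn0 : n = 0
    · exact absurd (not_pumpable_zero B hfo hV hsub m (by rw [hsum, hn0]; simp)) hm0
    obtain ⟨a, ha, ha'⟩ := exists_first m hm0
    obtain ⟨b, hb, hb'⟩ := exists_first n hn0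
    have hab := hinj a b (by simp only [hm] at ha; omega) (by simp only [hn] at hb; omega)
      (velocity_eq B hsub m n a b ha ha' hb hb' hsum)
    subst hab
    simp only [hm, hn] at ha hb
    omega
  funext j
  rw [hmn, key.1, key.2]
  simp

/-! ### Rational relations between the velocities -/

theorem stmt11 {N : ℕ} (B : ZBiautomaticStructure N) (hfo : B.FiniteToOne)
    (α : ℕ) (U : Fin (α + 1) → List B.X) (V : Fin α → List B.X)
    (hV : ∀ j, V j ≠ [])
    (hsub : ∀ k : Fin α → ℕ,
      (U 0 ++ (List.ofFn fun j : Fin α =>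
        (List.replicate (k j) (V j)).flatten ++ U j.succ).flatten) ∈ B.L) :
    LinearIndependent ℚ ((↑) : ↥(Set.range fun j : Fin α =>
      fun i : Fin N => (wordSum B.π (V j) i : ℚ) / ((V j).length : ℚ)) → (Fin N → ℚ)) := by
  classical
  set f : Fin α → Fin N → ℚ := fun j i => (wordSum B.π (V j) i : ℚ) / ((V j).length : ℚ) with hf
  have hlen : ∀ j, ((V j).length : ℚ) ≠ 0 := fun j => by
    simpa using hV j
  rw [← LinearIndependent.iff_fractionRing ℤ ℚ, Fintype.linearIndependent_iff]
  intro g hg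
  choose σ hσ using fun x : Set.range f => x.2
  have hσ' : ∀ x, (⟨f (σ x), σ x, rfl⟩ : Set.range f) = x := fun x => Subtype.ext (hσ x)
  -- the relation, transported to the chosen indices, multiplied by the product of all lengths
  let e : Fin α → ℤ := fun j =>
    if σ ⟨f j, j, rfl⟩ = j then
      g ⟨f j, j, rfl⟩ * ∏ l ∈ Finset.univ.erase j, ((V l).length : ℤ) else 0
  have he_ne : ∀ j, e j ≠ 0 → σ ⟨f j, j, rfl⟩ = j := fun j hj => by
    by_contra h
    exact hj (if_neg h)
  have hD : ∀ j, ((∏ l ∈ Finset.univ.erase j, ((V l).length : ℤ) : ℤ) : ℚ)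
      = (∏ l, ((V l).length : ℚ)) / (V j).length := fun j => by
    rw [eq_div_iff (hlen j)]
    push_cast
    exact Finset.prod_erase_mul _ _ (Finset.mem_univ j)
  have he0 : e = 0 := by
    refine int_relation_trivial B hfo hV hsub e (fun a b ha hb hab => ?_) ?_
    · have hfab : f a = f b := by
        funext i
        simp only [hf]
        rw [div_eq_div_iff (hlen a) (hlen b)]
        have := hab i
        qify at this
        linarith
      rw [← he_ne a ha, ← he_ne b hb]
      congr 1
      exact Subtype.ext hfab
    · funext i
      rw [Finset.sum_apply]
      have hgi := congrFun hg i
      rw [Finset.sum_apply] at hgi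
      simp only [Pi.smul_apply, Pi.zero_apply, smul_eq_mul, zsmul_eq_mul] at hgi ⊢
      qify
      have hinjσ : Function.Injective σ := fun x y hxy => by
        rw [← hσ' x, ← hσ' y]
        simp only [hxy]
      have hrw : ∑ j, (e j : ℚ) * (wordSum B.π (V j) i : ℚ)
          = ∑ x, (e (σ x) : ℚ) * (wordSum B.π (V (σ x)) i : ℚ) := by
        symm
        refine Fintype.sum_of_injective σ hinjσ _ _ (fun j hj => ?_) (fun x => rfl)
        have : e j = 0 := if_neg fun h => hj ⟨_, h⟩
        simp [this]
      rw [hrw, ← mul_zero (∏ l, ((V l).length : ℚ)), ← hgi, Finset.mul_sum]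
      refine Finset.sum_congr rfl fun x _ => ?_
      have h1 : e (σ x) = g x * ∏ l ∈ Finset.univ.erase (σ x), ((V l).length : ℤ) := by
        simp only [e, hσ', if_true]
      have h2 : (x : Fin N → ℚ) i = (wordSum B.π (V (σ x)) i : ℚ) / (V (σ x)).length := by
        rw [← hσ x]
      rw [h1, h2, Int.cast_mul, hD]
      ring
  intro x
  have hx := congrFun he0 (σ x)
  simp only [e, hσ', if_true, Pi.zero_apply, mul_eq_zero] at hx
  refine hx.resolve_right (Finset.prod_ne_zero_iff.2 fun l _ => ?_)
  exact_mod_cast hlen l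
end
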